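/- The fractional cost of the adjusted correlation metric f in the ℓ1-norm objective satisfies Σ_{u∈V} Σ_{v∈N_u^+} f_uv + Σ_{u∈V} Σ_{v∈N_u^-} (1 − f_uv) ≤ 74 · OPT(1). -/

import Mathlib

/-!
Fix a clustering `c`, write `y u` for the number of disagreements at `u`, `Δ u` for the size of
the positive neighborhood, and `D = ∑ y u`. Every part of the fractional cost is charged to `D`.

* If `u`, `v` share a cluster, every vertex of the symmetric difference of their (adjacent)
  positive neighborhoods disagrees with `u` or with `v`; if they lie in different clusters, the
  same holds for every common positive neighbor. Hence the cost of a pair that is not itself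
  a disagreement and avoids `R₁` is at most `y u / Δ u + y v / Δ v` (`corrDist_le`,
  `one_sub_corrDist_le`). Summing over positive pairs costs `2 D`; summing over close negative
  pairs outside `R₁` costs at most `2 · (10/3) D`, by the definition of `R₁`.
* Positive edges at `R₁` cost at most `2 ∑_{u ∈ R₁} Δ u`, and `sum_R1_le` bounds this sum by
  `61/5 · D`. If `y u ≥ Δ u / 10`, charge `u` itself. Otherwise the cluster of `u` is almost its
  positive neighborhood, so most of the at least `10/3 · Δ u` close negative neighbors of `u` lie
  in other clusters, yet each keeps at least `Δ u / 5` positive neighbors `w` inside the cluster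
  of `u`. Thus `(Δ u)² ≤ 2 ∑ y w` over the positive neighbors `w` in the cluster
  (`sq_le_of_mem_R1`). As the cluster has size at most `11/10 · Δ u`, each `w` is charged in
  total at most `2 · 11/10 · y w`.

Altogether the cost is at most `(3 + 122/5 + 1 + 20/3) D`, which is less than `74 D`.
-/

open Finset

noncomputable section

variable {V : Type*} [Fintype V] [DecidableEq V]

/-- Positive neighborhood of `u` (including the positive self-loop at `u`). -/
def Nplus (E : V → V → Prop) [DecidableRel E] (u : V) : Finset V :=
  insert u (Finset.univ.filter fun v => v ≠ u ∧ E u v)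

/-- Negative neighborhood of `u`. -/
def Nminus (E : V → V → Prop) [DecidableRel E] (u : V) : Finset V :=
  Finset.univ.filter fun v => v ≠ u ∧ ¬ E u v

/-- The correlation metric `d`. -/
def corrDist (E : V → V → Prop) [DecidableRel E] (u v : V) : ℝ :=
  if u = v then 0
  else 1 - ((Nplus E u ∩ Nplus E v).card : ℝ) / ((Nplus E u ∪ Nplus E v).card : ℝ)

/-- The set `R₁` of vertices `u` with `|N_u^- ∩ {v : d_uv ≤ 0.7}| ≥ (10/3)·Δ_u`. -/
def R1set (E : V → V → Prop) [DecidableRel E] : Finset V :=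
  Finset.univ.filter fun u =>
    (10 / 3 : ℝ) * (Nplus E u).card ≤ ((Nminus E u).filter fun v => corrDist E u v ≤ 0.7).card

/-- The adjusted correlation metric `f`: start from `d`, round negative edges with
`d > 0.7` up to `1`, and set `f_uv = 1` for all `v ≠ u` whenever `u ∈ R₁`. -/
def adjDist (E : V → V → Prop) [DecidableRel E] (u v : V) : ℝ :=
  if u = v then 0
  else if u ∈ R1set E ∨ v ∈ R1set E then 1
  else if ¬ E u v ∧ 0.7 < corrDist E u v then 1
  else corrDist E u v

/-- A clustering is encoded by a map `c : V → V`; the cluster `C(u)` is the fiber of `c` at `u`. -/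
def clusterOf (c : V → V) (u : V) : Finset V :=
  Finset.univ.filter fun w => c w = c u

/-- The number of disagreements incident to `u` with respect to the clustering `c`. -/
def disag (E : V → V → Prop) [DecidableRel E] (c : V → V) (u : V) : ℕ :=
  (Finset.univ.filter fun v =>
    v ≠ u ∧ ((E u v ∧ c u ≠ c v) ∨ (¬ E u v ∧ c u = c v))).card

/-- `OPT(1)`: the minimum total number of disagreements over all clusterings. -/
def OPT1 (E : V → V → Prop) [DecidableRel E] : ℕ :=
  Finset.univ.inf' ⟨id, Finset.mem_univ id⟩ fun c : V → V => ∑ u, disag E c u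

/-- `OPT(p)`: the minimum `ℓ_p`-norm of the disagreement vector over all clusterings. -/
def OPTlp (E : V → V → Prop) [DecidableRel E] (p : ℝ) : ℝ :=
  Finset.univ.inf' ⟨id, Finset.mem_univ id⟩ fun c : V → V =>
    (∑ u, (disag E c u : ℝ) ^ p) ^ (1 / p)

/-- `OPT(∞)`: the minimum `ℓ_∞`-norm of the disagreement vector over all clusterings. -/
def OPTinf (E : V → V → Prop) [DecidableRel E] : ℕ :=
  Finset.univ.inf' ⟨id, Finset.mem_univ id⟩ fun c : V → V => Finset.univ.sup (disag E c)

/-- The set of bad triangles: triples of distinct vertices spanning exactly two positive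
edges and one negative edge. -/
def badTriangles (E : V → V → Prop) [DecidableRel E] : Finset (Finset V) :=
  Finset.univ.filter fun T =>
    ∃ u v w : V, u ≠ v ∧ u ≠ w ∧ v ≠ w ∧ T = {u, v, w} ∧ E u v ∧ E u w ∧ ¬ E v w

section Helpers

variable {E : V → V → Prop} [DecidableRel E]

/-- The vertices whose edge to `u` is a disagreement with respect to `c`. -/
def dset (E : V → V → Prop) [DecidableRel E] (c : V → V) (u : V) : Finset V :=
  Finset.univ.filter fun v =>
    v ≠ u ∧ ((E u v ∧ c u ≠ c v) ∨ (¬ E u v ∧ c u = c v))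

/-- The negative neighbors `v` of `u` that are close to it: `d_uv ≤ 0.7`. -/
def closeNeg (E : V → V → Prop) [DecidableRel E] (u : V) : Finset V :=
  (Nminus E u).filter fun v => corrDist E u v ≤ 0.7

lemma disag_eq (c : V → V) (u : V) : disag E c u = (dset E c u).card := rfl

lemma mem_Nplus {u v : V} : v ∈ Nplus E u ↔ v = u ∨ E u v := by
  simp only [Nplus, mem_insert, mem_filter, mem_univ, true_and]
  tauto

lemma mem_dset {c : V → V} {u v : V} :
    v ∈ dset E c u ↔ v ≠ u ∧ ((E u v ∧ c u ≠ c v) ∨ (¬ E u v ∧ c u = c v)) := by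
  simp [dset]

lemma mem_Nminus {u v : V} : v ∈ Nminus E u ↔ v ≠ u ∧ ¬ E u v := by
  simp [Nminus]

lemma Nplus_symm (hs : ∀ u v, E u v ↔ E v u) {u v : V} : v ∈ Nplus E u ↔ u ∈ Nplus E v := by
  rw [mem_Nplus, mem_Nplus, hs u v, eq_comm]

lemma card_Nplus_pos (u : V) : (0 : ℝ) < (Nplus E u).card := by
  have : 0 < (Nplus E u).card := Finset.card_pos.2 ⟨u, mem_Nplus.2 (Or.inl rfl)⟩
  exact_mod_cast this

lemma corrDist_symm (u v : V) : corrDist E u v = corrDist E v u := by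
  unfold corrDist
  rw [inter_comm, union_comm]
  by_cases h : u = v
  · simp [h]
  · simp [h, Ne.symm h]

lemma union_bounds (u v : V) : ((Nplus E u).card : ℝ) ≤ (Nplus E u ∪ Nplus E v).card ∧
    ((Nplus E v).card : ℝ) ≤ (Nplus E u ∪ Nplus E v).card := by
  constructor
  · exact_mod_cast card_le_card subset_union_left
  · exact_mod_cast card_le_card subset_union_right

/-- The passage from `(y u + y v) / |N_u ∪ N_v|` to `y u / Δ u + y v / Δ v`. -/
lemma div_union_le (c : V → V) (u v : V) {x : ℝ}
    (hx : x ≤ (disag E c u : ℝ) + disag E c v) :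
    x / ((Nplus E u ∪ Nplus E v).card : ℝ) ≤
      (disag E c u : ℝ) / (Nplus E u).card + (disag E c v : ℝ) / (Nplus E v).card := by
  obtain ⟨h1, h2⟩ := union_bounds (E := E) u v
  have pu := card_Nplus_pos (E := E) u
  have pv := card_Nplus_pos (E := E) v
  calc x / ((Nplus E u ∪ Nplus E v).card : ℝ)
      ≤ ((disag E c u : ℝ) + disag E c v) / ((Nplus E u ∪ Nplus E v).card : ℝ) := by gcongr
    _ = (disag E c u : ℝ) / ((Nplus E u ∪ Nplus E v).card : ℝ)
        + (disag E c v : ℝ) / ((Nplus E u ∪ Nplus E v).card : ℝ) := add_div _ _ _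
    _ ≤ _ := by gcongr

/-- For adjacent `u`, `v` in one cluster, each vertex of `N_u ∆ N_v` disagrees with `u` or `v`. -/
lemma corrDist_le (hs : ∀ u v, E u v ↔ E v u) (c : V → V) {u v : V} (hE : E u v)
    (hc : c u = c v) :
    corrDist E u v ≤
      (disag E c u : ℝ) / (Nplus E u).card + (disag E c v : ℝ) / (Nplus E v).card := by
  unfold corrDist
  split_ifs with h
  · positivity
  have hsub : (Nplus E u ∪ Nplus E v) \ (Nplus E u ∩ Nplus E v) ⊆ dset E c u ∪ dset E c v := by
    intro w hw
    have hE' := (hs u v).1 hE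
    simp only [mem_sdiff, mem_union, mem_inter, mem_Nplus, mem_dset] at hw ⊢
    by_cases h1 : w = u
    · subst h1; tauto
    by_cases h2 : w = v
    · subst h2; tauto
    by_cases h3 : c v = c w
    · have : c u = c w := hc.trans h3
      tauto
    · have : c u ≠ c w := fun h => h3 (hc ▸ h)
      tauto
  have hcard := (card_le_card hsub).trans (card_union_le _ _)
  have hin : Nplus E u ∩ Nplus E v ⊆ Nplus E u ∪ Nplus E v :=
    inter_subset_left.trans subset_union_left
  rw [card_sdiff_of_subset hin, tsub_le_iff_right] at hcard
  have hcard' : ((Nplus E u ∪ Nplus E v).card : ℝ) ≤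
      (disag E c u : ℝ) + disag E c v + (Nplus E u ∩ Nplus E v).card := by
    exact_mod_cast hcard
  have pU : (0 : ℝ) < (Nplus E u ∪ Nplus E v).card :=
    (card_Nplus_pos u).trans_le (union_bounds u v).1
  have := div_union_le (E := E) c u v
    (x := ((Nplus E u ∪ Nplus E v).card : ℝ) - (Nplus E u ∩ Nplus E v).card) (by linarith)
  rwa [sub_div, div_self pU.ne'] at this

/-- For `u`, `v` in different clusters, each common positive neighbor disagrees with `u` or `v`. -/
lemma one_sub_corrDist_le (c : V → V) {u v : V} (hc : c u ≠ c v) :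
    1 - corrDist E u v ≤
      (disag E c u : ℝ) / (Nplus E u).card + (disag E c v : ℝ) / (Nplus E v).card := by
  have huv : u ≠ v := fun h => hc (h ▸ rfl)
  unfold corrDist
  rw [if_neg huv, sub_sub_cancel]
  apply div_union_le
  have hsub : Nplus E u ∩ Nplus E v ⊆ dset E c u ∪ dset E c v := by
    intro w hw
    simp only [mem_union, mem_inter, mem_Nplus, mem_dset] at hw ⊢
    by_cases h1 : w = u
    · subst h1
      have := hc.symm
      tauto
    by_cases h2 : w = v
    · subst h2; tauto
    by_cases h3 : c u = c w
    · have : c v ≠ c w := fun h => hc (h3.trans h.symm)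
      tauto
    · tauto
  exact_mod_cast (card_le_card hsub).trans (card_union_le _ _)

lemma corrDist_nonneg (u v : V) : 0 ≤ corrDist E u v := by
  unfold corrDist
  split_ifs with h
  · exact le_rfl
  have : ((Nplus E u ∩ Nplus E v).card : ℝ) ≤ (Nplus E u ∪ Nplus E v).card := by
    exact_mod_cast card_le_card (inter_subset_left.trans subset_union_left)
  have := div_le_one_of_le₀ this (by positivity)
  linarith

lemma corrDist_le_one (u v : V) : corrDist E u v ≤ 1 := by
  unfold corrDist
  split_ifs with h
  · norm_num
  have : (0 : ℝ) ≤ ((Nplus E u ∩ Nplus E v).card : ℝ) / (Nplus E u ∪ Nplus E v).card := by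
    positivity
  linarith

lemma adjDist_nonneg (u v : V) : 0 ≤ adjDist E u v := by
  unfold adjDist
  split_ifs <;> first | exact corrDist_nonneg u v | norm_num

lemma adjDist_le_one (u v : V) : adjDist E u v ≤ 1 := by
  unfold adjDist
  split_ifs <;> first | exact corrDist_le_one u v | norm_num

lemma mem_R1 {u : V} : u ∈ R1set E ↔
    (10 / 3 : ℝ) * (Nplus E u).card ≤ (closeNeg E u).card := by
  simp [R1set, closeNeg]

/-- The double count behind the bound on `R₁`: if `u ∈ R₁` has few disagreements, then its close
negative neighbors outside `C(u)` send many disagreeing positive edges into `N_u ∩ C(u)`. -/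
lemma sq_le_of_mem_R1 (hs : ∀ u v, E u v ↔ E v u) (c : V → V) {u : V} (hu : u ∈ R1set E)
    (hy : 10 * (disag E c u : ℝ) < (Nplus E u).card) :
    ((Nplus E u).card : ℝ) ^ 2 ≤
      2 * ∑ w ∈ (Nplus E u).filter (fun w => c w = c u), (disag E c w : ℝ) := by
  set Δ : ℝ := ((Nplus E u).card : ℝ) with hΔ
  have hpos : 0 < Δ := card_Nplus_pos u
  set A' := (closeNeg E u).filter (fun v => c v ≠ c u) with hA'
  set W := (Nplus E u).filter (fun w => c w = c u) with hW
  have hAcard : (97 / 30 : ℝ) * Δ ≤ A'.card := by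
    have h1 : closeNeg E u ⊆ A' ∪ dset E c u := by
      intro v hv
      have hn := mem_Nminus.1 (mem_filter.1 hv).1
      by_cases h : c v = c u
      · exact mem_union_right _ (mem_dset.2 ⟨hn.1, Or.inr ⟨hn.2, h.symm⟩⟩)
      · exact mem_union_left _ (mem_filter.2 ⟨hv, h⟩)
    have h2 : ((closeNeg E u).card : ℝ) ≤ A'.card + disag E c u := by
      exact_mod_cast (card_le_card h1).trans (card_union_le _ _)
    have h3 := mem_R1.1 hu
    linarith
  have hWcard : ∀ v ∈ A', (1 / 5 : ℝ) * Δ ≤ (W.filter (fun w => w ∈ Nplus E v)).card := by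
    intro v hv
    have hv1 := (mem_filter.1 (mem_filter.1 hv).1)
    have hn := mem_Nminus.1 hv1.1
    have hd := hv1.2
    unfold corrDist at hd
    rw [if_neg hn.1.symm] at hd
    have hU := (union_bounds (E := E) u v).1
    have pU : (0 : ℝ) < (Nplus E u ∪ Nplus E v).card := hpos.trans_le hU
    have h4 : (3 / 10 : ℝ) ≤
        ((Nplus E u ∩ Nplus E v).card : ℝ) / (Nplus E u ∪ Nplus E v).card := by
      norm_num at hd ⊢; linarith
    rw [le_div_iff₀ pU] at h4
    have h1 : Nplus E u ∩ Nplus E v ⊆ (W.filter (fun w => w ∈ Nplus E v)) ∪ dset E c u := by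
      intro w hw
      obtain ⟨hw1, hw2⟩ := mem_inter.1 hw
      by_cases h : c w = c u
      · exact mem_union_left _ (mem_filter.2 ⟨mem_filter.2 ⟨hw1, h⟩, hw2⟩)
      · have hne : w ≠ u := fun e => h (e ▸ rfl)
        exact mem_union_right _ (mem_dset.2
          ⟨hne, Or.inl ⟨(mem_Nplus.1 hw1).resolve_left hne, Ne.symm h⟩⟩)
    have h2 : ((Nplus E u ∩ Nplus E v).card : ℝ) ≤
        (W.filter (fun w => w ∈ Nplus E v)).card + disag E c u := by
      exact_mod_cast (card_le_card h1).trans (card_union_le _ _)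
    linarith
  have hdc : ∑ v ∈ A', (W.filter (fun w => w ∈ Nplus E v)).card ≤ ∑ w ∈ W, disag E c w := by
    have := sum_card_bipartiteAbove_eq_sum_card_bipartiteBelow (s := A') (t := W)
      (fun v w => w ∈ Nplus E v)
    unfold bipartiteAbove bipartiteBelow at this
    rw [this]
    refine sum_le_sum fun w hw => ?_
    rw [disag_eq]
    refine card_le_card fun v hv => ?_
    obtain ⟨hv1, hv2⟩ := mem_filter.1 hv
    have hcv := (mem_filter.1 hv1).2
    have hcw := (mem_filter.1 hw).2
    have hcne : c w ≠ c v := fun e => hcv (e ▸ hcw)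
    have hne : v ≠ w := fun e => hcne (e ▸ rfl)
    rw [mem_dset]
    exact ⟨hne, Or.inl ⟨(hs _ _).1 ((mem_Nplus.1 hv2).resolve_left hne.symm), hcne⟩⟩
  have hdc' : (∑ v ∈ A', ((W.filter (fun w => w ∈ Nplus E v)).card : ℝ)) ≤
      ∑ w ∈ W, (disag E c w : ℝ) := by exact_mod_cast hdc
  have hlow := card_nsmul_le_sum A' _ _ hWcard
  rw [nsmul_eq_mul] at hlow
  have : (97 / 30 : ℝ) * Δ * (1 / 5 * Δ) ≤ A'.card * (1 / 5 * Δ) := by gcongr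
  nlinarith [sq_nonneg Δ]

/-- `C(u)` is contained in `N_u` up to disagreements at `u`. -/
lemma card_cluster_le (c : V → V) (u : V) :
    ((clusterOf c u).card : ℝ) ≤ (Nplus E u).card + disag E c u := by
  have h : clusterOf c u ⊆ Nplus E u ∪ dset E c u := by
    intro w hw
    have := (mem_filter.1 hw).2.symm
    simp only [mem_union, mem_Nplus, mem_dset]
    tauto
  exact_mod_cast (card_le_card h).trans (card_union_le _ _)

/-- The charge per disagreement at `w` from the members of its cluster with few disagreements:
each such `u` has `|C(w)| ≤ 11/10 · Δ u`, and there are at most `|C(w)|` of them. -/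
lemma sum_inv_le (c : V → V) (w : V) :
    ∑ u ∈ (clusterOf c w).filter (fun u => 10 * (disag E c u : ℝ) < (Nplus E u).card),
      (1 / (Nplus E u).card : ℝ) ≤ 11 / 10 := by
  have hpos : (0 : ℝ) < (clusterOf c w).card := by
    exact_mod_cast card_pos.2 ⟨w, by simp [clusterOf]⟩
  have hterm : ∀ u ∈ (clusterOf c w).filter
      (fun u => 10 * (disag E c u : ℝ) < (Nplus E u).card),
      (1 / (Nplus E u).card : ℝ) ≤ 11 / 10 / (clusterOf c w).card := by
    intro u hu
    obtain ⟨h1, h2⟩ := mem_filter.1 hu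
    have hcu : c u = c w := (mem_filter.1 h1).2
    have h3 := card_cluster_le (E := E) c u
    have h4 : clusterOf c u = clusterOf c w := by unfold clusterOf; rw [hcu]
    rw [h4] at h3
    rw [div_le_div_iff₀ (card_Nplus_pos u) hpos]
    linarith
  refine (sum_le_card_nsmul _ _ _ hterm).trans ?_
  rw [nsmul_eq_mul]
  calc _ ≤ ((clusterOf c w).card : ℝ) * (11 / 10 / (clusterOf c w).card) := by
        gcongr
        exact filter_subset _ _
    _ = 11 / 10 := by field_simp

/-- The number of positive edges (and self-loops) at `R₁` is within a constant of the
number of disagreements. -/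
lemma sum_R1_le (hs : ∀ u v, E u v ↔ E v u) (c : V → V) :
    ∑ u ∈ R1set E, ((Nplus E u).card : ℝ) ≤ 61 / 5 * ∑ u, (disag E c u : ℝ) := by
  -- `T u w` is the charge that `u` places on `w`.
  set T : V → V → ℝ := fun u w =>
    if c u = c w ∧ 10 * (disag E c u : ℝ) < (Nplus E u).card then
      (disag E c w : ℝ) * (1 / (Nplus E u).card) else 0 with hT
  have hT0 : ∀ u w, 0 ≤ T u w := by
    intro u w; simp only [hT]; split_ifs <;> positivity
  have hpt : ∀ u ∈ R1set E, ((Nplus E u).card : ℝ) ≤ 10 * disag E c u + 2 * ∑ w, T u w := by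
    intro u hu
    by_cases hy : 10 * (disag E c u : ℝ) < (Nplus E u).card
    · have h1 := sq_le_of_mem_R1 hs c hu hy
      have hp := card_Nplus_pos (E := E) u
      have h2 : (∑ w ∈ (Nplus E u).filter (fun w => c w = c u), (disag E c w : ℝ))
          * (1 / (Nplus E u).card) ≤ ∑ w, T u w := by
        rw [sum_mul]
        refine le_trans (sum_le_sum fun w hw => ?_)
          (sum_le_sum_of_subset_of_nonneg (subset_univ _) fun w _ _ => hT0 u w)
        have := (mem_filter.1 hw).2.symm
        simp only [hT]
        rw [if_pos ⟨this, hy⟩]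
      have h3 : ((Nplus E u).card : ℝ) ≤
          2 * ((∑ w ∈ (Nplus E u).filter (fun w => c w = c u), (disag E c w : ℝ))
          * (1 / (Nplus E u).card)) := by
        rw [mul_one_div, ← mul_div_assoc, le_div_iff₀ hp]
        nlinarith
      have : (0 : ℝ) ≤ disag E c u := by positivity
      linarith
    · have := sum_nonneg fun w (_ : w ∈ univ) => hT0 u w
      linarith
  have hcol : ∀ w, ∑ u, T u w ≤ 11 / 10 * (disag E c w : ℝ) := by
    intro w
    have h1 : ∑ u, T u w = (disag E c w : ℝ) *
        ∑ u ∈ (clusterOf c w).filter (fun u => 10 * (disag E c u : ℝ) < (Nplus E u).card),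
          (1 / (Nplus E u).card : ℝ) := by
      simp only [hT, clusterOf]
      rw [filter_filter, mul_sum, sum_filter]
    rw [h1, mul_comm]
    have := sum_inv_le (E := E) c w
    gcongr
  calc ∑ u ∈ R1set E, ((Nplus E u).card : ℝ)
      ≤ ∑ u ∈ R1set E, (10 * (disag E c u : ℝ) + 2 * ∑ w, T u w) := sum_le_sum hpt
    _ ≤ ∑ u, (10 * (disag E c u : ℝ) + 2 * ∑ w, T u w) := by
        refine sum_le_sum_of_subset_of_nonneg (subset_univ _) fun u _ _ => ?_
        have := sum_nonneg fun w (_ : w ∈ univ) => hT0 u w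
        positivity
    _ = 10 * ∑ u, (disag E c u : ℝ) + 2 * ∑ w, ∑ u, T u w := by
        rw [sum_add_distrib, ← mul_sum, ← mul_sum, sum_comm]
    _ ≤ 10 * ∑ u, (disag E c u : ℝ) + 2 * ∑ w, 11 / 10 * (disag E c w : ℝ) := by
        gcongr with w; exact hcol w
    _ = _ := by rw [← mul_sum]; ring

lemma sum_Nplus_swap (hs : ∀ u v, E u v ↔ E v u) (g : V → ℝ) :
    ∑ u, ∑ v ∈ Nplus E u, g v = ∑ u, ((Nplus E u).card : ℝ) * g u := by
  rw [sum_comm' (t' := univ) (s' := fun v => Nplus E v)]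
  · simp
  · intro u v
    simp [Nplus_symm hs (u := u)]

lemma sum_dset_indicator_le (c : V → V) (u : V) (s : Finset V) :
    ∑ v ∈ s, (if v ∈ dset E c u then (1 : ℝ) else 0) ≤ disag E c u := by
  rw [disag_eq, ← sum_filter, sum_const, nsmul_eq_mul, mul_one]
  exact_mod_cast card_le_card fun v hv => (mem_filter.1 hv).2

lemma positive_cost_le (hs : ∀ u v, E u v ↔ E v u) (c : V → V) :
    ∑ u, ∑ v ∈ Nplus E u, adjDist E u v ≤
      3 * (∑ u, (disag E c u : ℝ)) + 2 * ∑ u ∈ R1set E, ((Nplus E u).card : ℝ) := by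
  -- `g` collects the charges that depend on one endpoint only.
  set g : V → ℝ := fun u =>
    (if u ∈ R1set E then (1 : ℝ) else 0) + (disag E c u : ℝ) / (Nplus E u).card with hg
  have hg0 : ∀ u, 0 ≤ g u := by
    intro u; simp only [hg]; split_ifs <;> positivity
  have hpt : ∀ u, ∀ v ∈ Nplus E u,
      adjDist E u v ≤ (if v ∈ dset E c u then (1 : ℝ) else 0) + g u + g v := by
    intro u v hv
    have gu := hg0 u
    have gv := hg0 v
    by_cases hd : v ∈ dset E c u
    · rw [if_pos hd]
      linarith [adjDist_le_one (E := E) u v]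
    rw [if_neg hd]
    by_cases huv : u = v
    · have : adjDist E u v = 0 := if_pos huv
      linarith
    have hE : E u v := (mem_Nplus.1 hv).resolve_left (Ne.symm huv)
    have hc : c u = c v := by
      by_contra h
      exact hd (mem_dset.2 ⟨Ne.symm huv, Or.inl ⟨hE, h⟩⟩)
    have q := corrDist_le hs c hE hc
    have qu : (0 : ℝ) ≤ (disag E c u : ℝ) / (Nplus E u).card := by positivity
    have qv : (0 : ℝ) ≤ (disag E c v : ℝ) / (Nplus E v).card := by positivity
    by_cases h1 : u ∈ R1set E
    · have : 1 ≤ g u := by simp only [hg, if_pos h1]; linarith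
      linarith [adjDist_le_one (E := E) u v]
    by_cases h2 : v ∈ R1set E
    · have : 1 ≤ g v := by simp only [hg, if_pos h2]; linarith
      linarith [adjDist_le_one (E := E) u v]
    have : adjDist E u v = corrDist E u v := by
      simp [adjDist, huv, h1, h2, hE]
    simp only [hg, if_neg h1, if_neg h2]
    linarith
  have hgs : ∑ u, ((Nplus E u).card : ℝ) * g u =
      (∑ u ∈ R1set E, ((Nplus E u).card : ℝ)) + ∑ u, (disag E c u : ℝ) := by
    simp only [hg, mul_add, sum_add_distrib, mul_ite, mul_one, mul_zero]
    congr 1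
    · rw [← sum_filter]; simp
    · refine sum_congr rfl fun u _ => ?_
      rw [mul_div_cancel₀ _ (card_Nplus_pos u).ne']
  calc ∑ u, ∑ v ∈ Nplus E u, adjDist E u v
      ≤ ∑ u, ∑ v ∈ Nplus E u, ((if v ∈ dset E c u then (1 : ℝ) else 0) + g u + g v) :=
        sum_le_sum fun u _ => sum_le_sum (hpt u)
    _ = (∑ u, ∑ v ∈ Nplus E u, (if v ∈ dset E c u then (1 : ℝ) else 0))
        + ∑ u, ((Nplus E u).card : ℝ) * g u + ∑ u, ((Nplus E u).card : ℝ) * g u := by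
        simp only [sum_add_distrib, sum_Nplus_swap hs g, sum_const, nsmul_eq_mul]
    _ ≤ (∑ u, (disag E c u : ℝ))
        + ∑ u, ((Nplus E u).card : ℝ) * g u + ∑ u, ((Nplus E u).card : ℝ) * g u := by
        gcongr with u
        exact sum_dset_indicator_le c u _
    _ = _ := by rw [hgs]; ring

lemma negative_cost_le (hs : ∀ u v, E u v ↔ E v u) (c : V → V) :
    ∑ u, ∑ v ∈ Nminus E u, (1 - adjDist E u v) ≤ 23 / 3 * ∑ u, (disag E c u : ℝ) := by
  -- `h u v` is the part of the cost of the pair charged to `u`.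
  set h : V → V → ℝ := fun u v =>
    if u ∉ R1set E ∧ v ∈ closeNeg E u then (disag E c u : ℝ) / (Nplus E u).card else 0 with hh
  have h0 : ∀ u v, 0 ≤ h u v := by
    intro u v; simp only [hh]; split_ifs <;> positivity
  have hpt : ∀ u, ∀ v ∈ Nminus E u,
      1 - adjDist E u v ≤ (if v ∈ dset E c u then (1 : ℝ) else 0) + (h u v + h v u) := by
    intro u v hv
    have a := h0 u v
    have b := h0 v u
    obtain ⟨hne, hE⟩ := mem_Nminus.1 hv
    by_cases hd : v ∈ dset E c u
    · rw [if_pos hd]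
      linarith [adjDist_nonneg (E := E) u v]
    rw [if_neg hd]
    have hc : c u ≠ c v := fun e => hd (mem_dset.2 ⟨hne, Or.inr ⟨hE, e⟩⟩)
    by_cases h1 : u ∈ R1set E ∨ v ∈ R1set E
    · have : adjDist E u v = 1 := by simp [adjDist, hne.symm, h1]
      linarith
    by_cases h2 : 0.7 < corrDist E u v
    · have : adjDist E u v = 1 := by
        unfold adjDist
        rw [if_neg hne.symm, if_neg h1, if_pos ⟨hE, h2⟩]
      linarith
    have h3 : adjDist E u v = corrDist E u v := by
      unfold adjDist
      rw [if_neg hne.symm, if_neg h1, if_neg fun e => h2 e.2]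
    have q := one_sub_corrDist_le (E := E) c hc
    push Not at h1 h2
    have m1 : v ∈ closeNeg E u := mem_filter.2 ⟨hv, h2⟩
    have m2 : u ∈ closeNeg E v := mem_filter.2
      ⟨mem_Nminus.2 ⟨hne.symm, fun e => hE ((hs _ _).1 e)⟩, by rwa [corrDist_symm]⟩
    simp only [hh]
    rw [if_pos ⟨h1.1, m1⟩, if_pos ⟨h1.2, m2⟩, h3]
    linarith
  have hrow : ∀ u, ∑ v, h u v ≤ 10 / 3 * (disag E c u : ℝ) := by
    intro u
    have hp := card_Nplus_pos (E := E) u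
    by_cases h1 : u ∈ R1set E
    · simp only [hh, h1, not_true_eq_false, false_and, if_false, sum_const_zero]
      positivity
    · have h2 : ((closeNeg E u).card : ℝ) ≤ 10 / 3 * (Nplus E u).card := by
        by_contra e
        exact h1 (mem_R1.2 (not_le.1 e).le)
      have h3 : ∑ v, h u v =
          (closeNeg E u).card * ((disag E c u : ℝ) / (Nplus E u).card) := by
        simp only [hh, h1, not_false_eq_true, true_and]
        rw [← sum_filter]
        simp
      rw [h3]
      calc _ ≤ 10 / 3 * ((Nplus E u).card : ℝ) * ((disag E c u : ℝ) / (Nplus E u).card) := by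
            gcongr
        _ = _ := by field_simp
  have hsum : ∑ u, ∑ v, h u v ≤ 10 / 3 * ∑ u, (disag E c u : ℝ) := by
    rw [mul_sum]
    exact sum_le_sum fun u _ => hrow u
  have hsum' : ∑ u, ∑ v, h v u = ∑ u, ∑ v, h u v := sum_comm
  calc ∑ u, ∑ v ∈ Nminus E u, (1 - adjDist E u v)
      ≤ ∑ u, ∑ v ∈ Nminus E u,
          ((if v ∈ dset E c u then (1 : ℝ) else 0) + (h u v + h v u)) :=
        sum_le_sum fun u _ => sum_le_sum (hpt u)
    _ ≤ ∑ u, ((disag E c u : ℝ) + ∑ v, (h u v + h v u)) := by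
        refine sum_le_sum fun u _ => ?_
        rw [sum_add_distrib]
        refine add_le_add (sum_dset_indicator_le c u _) ?_
        exact sum_le_sum_of_subset_of_nonneg (subset_univ _)
          fun v _ _ => add_nonneg (h0 u v) (h0 v u)
    _ = (∑ u, (disag E c u : ℝ)) + (∑ u, ∑ v, h u v + ∑ u, ∑ v, h v u) := by
        simp only [sum_add_distrib]
    _ ≤ _ := by rw [hsum']; linarith

end Helpers

/-- the fractional cost of the adjusted correlation metric in the
`ℓ_1`-norm objective is at most `74 · OPT(1)`. -/
theorem l1_frac_cost (E : V → V → Prop) [DecidableRel E]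
    (hsymm : ∀ u v, E u v ↔ E v u) :
    (∑ u, ∑ v ∈ Nplus E u, adjDist E u v) +
      (∑ u, ∑ v ∈ Nminus E u, (1 - adjDist E u v)) ≤ 74 * (OPT1 E : ℝ) := by
  obtain ⟨c, -, hc⟩ := Finset.exists_mem_eq_inf' (s := (Finset.univ : Finset (V → V)))
    ⟨id, Finset.mem_univ id⟩ fun c : V → V => ∑ u, disag E c u
  have hO : (OPT1 E : ℝ) = ∑ u, (disag E c u : ℝ) := by
    unfold OPT1
    rw [hc]
    push_cast
    rfl
  rw [hO]
  have h1 := positive_cost_le hsymm c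
  have h2 := negative_cost_le hsymm c
  have h3 := sum_R1_le hsymm c
  have h4 : (0 : ℝ) ≤ ∑ u, (disag E c u : ℝ) := by positivity
  linarith
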